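/- arXiv:2311.06161 — 4 statements merged into one kernel-verified Lean document; each statement's English description precedes it below -/
import Mathlib

section
/- For every positive integers k and l with k ≥ 3, there exists a finite simple graph G such that χ(G) = k, ir(G) = l, and χ_i(G) = k + l − 1. -/
/-!  Common definitions: irredundance, irredundance coloring,
irredundance compelling coloring, and related graph parameters. -/

variable {V : Type*}

/-- The closed neighborhood `N[v]` of a vertex `v`. -/
def closedNbr (G : SimpleGraph V) (v : V) : Set V := insert v (G.neighborSet v)

/-- The private neighbor set `pn[v,S] = N[v] − N[S − {v}]`. -/
def pnSet (G : SimpleGraph V) (S : Set V) (v : V) : Set V :=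
  closedNbr G v \ ⋃ w ∈ S \ {v}, closedNbr G w

/-- A set `S` is irredundant if every vertex of `S` has a private neighbor. -/
def IsIrredundant (G : SimpleGraph V) (S : Set V) : Prop :=
  ∀ v ∈ S, (pnSet G S v).Nonempty

/-- A maximal irredundant set: irredundant, and adding any outside vertex
destroys irredundance. -/
def IsMaxIrredundant (G : SimpleGraph V) (S : Set V) : Prop :=
  IsIrredundant G S ∧ ∀ w ∉ S, ¬ IsIrredundant G (insert w S)

/-- The lower irredundance number `ir(G)`: the minimum cardinality of a
maximal irredundant set. -/
noncomputable def lowerIr (G : SimpleGraph V) : ℕ :=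
  sInf {n | ∃ S : Set V, IsMaxIrredundant G S ∧ S.ncard = n}

/-- A proper coloring of `G` with colors in `Fin k`, viewed as a function. -/
def IsProperColoring (G : SimpleGraph V) {k : ℕ} (C : V → Fin k) : Prop :=
  ∀ u v, G.Adj u v → C u ≠ C v

/-- `G` has an irredundance coloring with `k` colors: a proper coloring
together with a maximal irredundant set whose vertices get distinct colors. -/
def IrredColorable (G : SimpleGraph V) (k : ℕ) : Prop :=
  ∃ C : V → Fin k, IsProperColoring G C ∧
    ∃ R : Set V, IsMaxIrredundant G R ∧ Set.InjOn C R

/-- The irredundance chromatic number `χᵢ(G)`. -/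
noncomputable def irChrom (G : SimpleGraph V) : ℕ := sInf {k | IrredColorable G k}

/-- `S` is a dominating set of `G`. -/
def IsDomSet (G : SimpleGraph V) (S : Set V) : Prop :=
  ∀ v, v ∈ S ∨ ∃ u ∈ S, G.Adj u v

/-- The domination number `γ(G)`. -/
noncomputable def domNum (G : SimpleGraph V) : ℕ :=
  sInf {n | ∃ S : Set V, IsDomSet G S ∧ S.ncard = n}

/-- `G` has a gamma coloring with `k` colors: a proper coloring together with
a dominating set whose vertices get distinct colors. -/
def GammaColorable (G : SimpleGraph V) (k : ℕ) : Prop :=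
  ∃ C : V → Fin k, IsProperColoring G C ∧
    ∃ D : Set V, IsDomSet G D ∧ Set.InjOn C D

/-- The gamma chromatic number `χ_γ(G)`. -/
noncomputable def gammaChrom (G : SimpleGraph V) : ℕ := sInf {k | GammaColorable G k}

/-- A rainbow committee of the coloring `C`: a set containing exactly one
vertex of each color class. -/
def IsRainbowCommittee {k : ℕ} (C : V → Fin k) (T : Set V) : Prop :=
  ∀ i : Fin k, ∃! v, v ∈ T ∧ C v = i

/-- `C` is an irredundance compelling coloring of `G` (with all `k` colors
used): a proper coloring, onto its `k` colors, such that every rainbow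
committee is an irredundant set. -/
def IsIRCColoring (G : SimpleGraph V) {k : ℕ} (C : V → Fin k) : Prop :=
  IsProperColoring G C ∧ Function.Surjective C ∧
    ∀ T : Set V, IsRainbowCommittee C T → IsIrredundant G T

/-- `G` admits an irredundance compelling coloring. -/
def IRCColorable (G : SimpleGraph V) : Prop :=
  ∃ (k : ℕ) (C : V → Fin k), IsIRCColoring G C

/-- The irredundance compelling chromatic number `χ_irc(G)`: the maximum
number of colors among all irredundance compelling colorings of `G`. -/
noncomputable def ircChrom (G : SimpleGraph V) : ℕ :=
  sSup {k | ∃ C : V → Fin k, IsIRCColoring G C}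

/-- `G` has a dominator coloring with `k` colors: a proper coloring, onto its
`k` colors, in which every vertex dominates some color class. -/
def DominatorColorable (G : SimpleGraph V) (k : ℕ) : Prop :=
  ∃ C : V → Fin k, IsProperColoring G C ∧ Function.Surjective C ∧
    ∀ v, ∃ i : Fin k, (∀ u, C u = i → G.Adj v u) ∨ {u | C u = i} = {v}

/-- The dominator chromatic number `χ_d(G)`. -/
noncomputable def domChrom (G : SimpleGraph V) : ℕ := sInf {k | DominatorColorable G k}

theorem mem_closedNbr {G : SimpleGraph V} {u v : V} :
    u ∈ closedNbr G v ↔ u = v ∨ G.Adj v u := Iff.rfl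

theorem mem_pnSet {G : SimpleGraph V} {S : Set V} {u v : V} :
    u ∈ pnSet G S v ↔ u ∈ closedNbr G v ∧ ∀ w ∈ S, w ≠ v → u ∉ closedNbr G w := by
  simp [pnSet]

section Transport

variable {W : Type*} {G : SimpleGraph V} {H : SimpleGraph W}

theorem mem_closedNbr_iso (e : G ≃g H) {u v : V} :
    e u ∈ closedNbr H (e v) ↔ u ∈ closedNbr G v :=
  or_congr e.injective.eq_iff e.map_adj_iff

theorem isIrredundant_preimage_iso (e : G ≃g H) {S : Set W} :
    IsIrredundant G (e ⁻¹' S) ↔ IsIrredundant H S := by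
  simp only [IsIrredundant, Set.Nonempty, mem_pnSet, e.surjective.forall, e.surjective.exists,
    mem_closedNbr_iso, Set.mem_preimage, ne_eq, e.injective.eq_iff]

theorem isMaxIrredundant_preimage_iso (e : G ≃g H) {S : Set W} :
    IsMaxIrredundant G (e ⁻¹' S) ↔ IsMaxIrredundant H S := by
  have hins (w : V) : insert w (e ⁻¹' S) = e ⁻¹' insert (e w) S := by
    ext x
    simp
  simp only [IsMaxIrredundant, e.surjective.forall, hins, isIrredundant_preimage_iso,
    Set.mem_preimage]

theorem lowerIr_congr (e : G ≃g H) : lowerIr G = lowerIr H := by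
  have hsurj : Function.Surjective (fun S : Set W => e ⁻¹' S) :=
    Set.preimage_surjective.2 e.injective
  simp only [lowerIr, hsurj.exists, isMaxIrredundant_preimage_iso]
  congr! 5 with n S
  rw [Set.ncard_preimage_of_injective_subset_range e.injective]
  simp [e.surjective.range_eq]

theorem IrredColorable.of_iso (e : G ≃g H) {k : ℕ} (h : IrredColorable G k) :
    IrredColorable H k := by
  obtain ⟨C, hC, R, hR, hinj⟩ := h
  refine ⟨C ∘ e.symm, fun u v huv => hC _ _ (e.symm.map_adj_iff.2 huv), e.symm ⁻¹' R,
    (isMaxIrredundant_preimage_iso e.symm).2 hR, ?_⟩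
  intro x hx y hy hxy
  exact e.symm.injective (hinj hx hy hxy)

theorem irChrom_congr (e : G ≃g H) : irChrom G = irChrom H := by
  have h (k : ℕ) : IrredColorable G k ↔ IrredColorable H k :=
    ⟨fun h => h.of_iso e, fun h => h.of_iso e.symm⟩
  simp only [irChrom, h]

end Transport

/-- An irredundant dominating set is a maximal irredundant set. -/
theorem IsIrredundant.isMaxIrredundant_of_isDomSet {G : SimpleGraph V} {S : Set V}
    (hS : IsIrredundant G S) (hdom : IsDomSet G S) : IsMaxIrredundant G S := by
  refine ⟨hS, fun w hw hins => ?_⟩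
  obtain ⟨u, hu⟩ := hins w (Set.mem_insert _ _)
  rw [mem_pnSet] at hu
  have hne {x : V} (hx : x ∈ S) : x ≠ w := fun h => hw (h ▸ hx)
  rcases hdom u with h | ⟨x, hx, hxu⟩
  · exact hu.2 u (Set.mem_insert_of_mem _ h) (hne h) (Or.inl rfl)
  · exact hu.2 x (Set.mem_insert_of_mem _ hx) (hne hx) (Or.inr hxu)

/-- Vertices of the extremal graph: `l` centers, a clique of `p` hubs, `m` leaves at each center,
and one tip for every pair of a hub and a center. -/
inductive HubVertex (p l m : ℕ) : Type
  | center (i : Fin l)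
  | hub (q : Fin p)
  | leaf (i : Fin l) (j : Fin m)
  | tip (q : Fin p) (i : Fin l)

namespace HubVertex

variable {p l m : ℕ}

/-- The edges of the extremal graph, each listed in one direction only
(except for those joining two hubs). -/
def HalfAdj : HubVertex p l m → HubVertex p l m → Prop
  | center _, hub _ => True
  | hub q, hub q' => q ≠ q'
  | center i, leaf i' _ => i = i'
  | center i, tip _ i' => i = i'
  | hub q, tip q' _ => q = q'
  | _, _ => False

instance : Finite (HubVertex p l m) := by
  let f : Fin l ⊕ Fin p ⊕ (Fin l × Fin m) ⊕ (Fin p × Fin l) → HubVertex p l m :=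
    Sum.elim center (Sum.elim hub (Sum.elim (fun x => leaf x.1 x.2) fun x => tip x.1 x.2))
  refine Finite.of_surjective f ?_
  rintro (i | q | ⟨i, j⟩ | ⟨q, i⟩)
  · exact ⟨Sum.inl i, rfl⟩
  · exact ⟨Sum.inr (Sum.inl q), rfl⟩
  · exact ⟨Sum.inr (Sum.inr (Sum.inl (i, j))), rfl⟩
  · exact ⟨Sum.inr (Sum.inr (Sum.inr (q, i))), rfl⟩

end HubVertex

open HubVertex

/-- Hubs form a clique, every hub is adjacent to every center, leaves hang on their center, and a
tip is adjacent to its hub and to its center. -/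
def hubGraph (p l m : ℕ) : SimpleGraph (HubVertex p l m) where
  Adj u v := HalfAdj u v ∨ HalfAdj v u
  symm := ⟨fun _ _ h => h.symm⟩
  loopless := ⟨fun u h => by cases u <;> simp [HalfAdj] at h⟩

section HubGraph

variable {p l m : ℕ}

theorem hubGraph_adj {u v : HubVertex p l m} :
    (hubGraph p l m).Adj u v ↔ HalfAdj u v ∨ HalfAdj v u := Iff.rfl

/-- A maximal irredundant set of the hub graph missing a center contains all leaves there. -/
theorem leaf_mem_of_center_notMem {R : Set (HubVertex p l m)}
    (hR : IsMaxIrredundant (hubGraph p l m) R) {i : Fin l} (hi : center i ∉ R) (j : Fin m) :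
    leaf i j ∈ R := by
  by_contra hj
  refine hR.2 _ hj fun v hv => ?_
  -- The neighbors of the leaf are not in `R`, so it is its own private neighbor.
  rcases hv with rfl | hv
  · refine ⟨leaf i j, mem_pnSet.2 ⟨Or.inl rfl, ?_⟩⟩
    rintro w (rfl | hw) hne hmem
    · exact hne rfl
    · rcases hmem with rfl | hadj
      · exact hj hw
      · cases w <;> simp_all [hubGraph_adj, HalfAdj]
  -- A private neighbor of `v` with respect to `R` other than `center i` survives.
  have hsurvive (u) (hu : u ∈ pnSet (hubGraph p l m) R v) (hne : u ≠ center i) :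
      (pnSet (hubGraph p l m) (insert (leaf i j) R) v).Nonempty := by
    rw [mem_pnSet] at hu
    refine ⟨u, mem_pnSet.2 ⟨hu.1, ?_⟩⟩
    rintro w (rfl | hw) hwv hmem
    · rcases hmem with rfl | hadj
      · rcases hu.1 with rfl | hadj
        · exact hj hv
        · cases v <;> simp_all [hubGraph_adj, HalfAdj]
      · cases u <;> simp_all [hubGraph_adj, HalfAdj]
    · exact hu.2 w hw hwv hmem
  obtain ⟨u, hu⟩ := hR.1 v hv
  by_cases hne : u = center i
  swap
  · exact hsurvive u hu hne
  subst hne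
  rw [mem_pnSet] at hu
  obtain ⟨hvu, hpriv⟩ := hu
  simp only [mem_closedNbr, hubGraph_adj] at hpriv
  rcases hvu with rfl | hadj
  · exact absurd hv hi
  cases v with
  | center i' => simp [hubGraph_adj, HalfAdj] at hadj
  | leaf i' j' =>
    obtain rfl : i = i' := by simpa [hubGraph_adj, HalfAdj] using hadj
    refine hsurvive (leaf i j') (mem_pnSet.2 ⟨Or.inl rfl, ?_⟩) (by simp)
    rintro w hw hwv (rfl | hadj')
    · exact hwv rfl
    · cases w <;> simp_all [hubGraph_adj, HalfAdj]
  | tip q i' =>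
    obtain rfl : i = i' := by simpa [hubGraph_adj, HalfAdj] using hadj
    refine hsurvive (tip q i) (mem_pnSet.2 ⟨Or.inl rfl, ?_⟩) (by simp)
    rintro w hw hwv (rfl | hadj')
    · exact hwv rfl
    · have := hpriv w hw hwv
      cases w <;> simp_all [hubGraph_adj, HalfAdj]
  | hub q =>
    refine hsurvive (tip q i) (mem_pnSet.2 ⟨Or.inr (by simp [hubGraph_adj, HalfAdj]), ?_⟩) (by simp)
    rintro w hw hwv (rfl | hadj')
    · exact hpriv _ hw hwv (by simp [HalfAdj])
    · have := hpriv w hw hwv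
      cases w <;> simp_all [hubGraph_adj, HalfAdj]

theorem center_mem_of_ncard_lt {R : Set (HubVertex p l m)}
    (hR : IsMaxIrredundant (hubGraph p l m) R) (hcard : R.ncard < m) (i : Fin l) :
    center i ∈ R := by
  by_contra hi
  have hsub : Set.range (leaf i : Fin m → HubVertex p l m) ⊆ R := by
    rintro _ ⟨j, rfl⟩
    exact leaf_mem_of_center_notMem hR hi j
  have hle := Set.ncard_le_ncard hsub
  rw [Set.ncard_range_of_injective (fun a b h => by simpa using h), Nat.card_fin] at hle
  omega

theorem isMaxIrredundant_range_center (hl : 0 < l) (hm : 0 < m) :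
    IsMaxIrredundant (hubGraph p l m) (Set.range center) := by
  refine IsIrredundant.isMaxIrredundant_of_isDomSet ?_ ?_
  · rintro _ ⟨i, rfl⟩
    refine ⟨leaf i ⟨0, hm⟩, mem_pnSet.2 ⟨Or.inr (by simp [hubGraph_adj, HalfAdj]), ?_⟩⟩
    rintro _ ⟨i', rfl⟩ hne
    simpa [mem_closedNbr, hubGraph_adj, HalfAdj] using hne
  · rintro (i | q | ⟨i, j⟩ | ⟨q, i⟩)
    · exact Or.inl ⟨i, rfl⟩
    · exact Or.inr ⟨_, ⟨⟨0, hl⟩, rfl⟩, by simp [hubGraph_adj, HalfAdj]⟩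
    · exact Or.inr ⟨_, ⟨i, rfl⟩, by simp [hubGraph_adj, HalfAdj]⟩
    · exact Or.inr ⟨_, ⟨i, rfl⟩, by simp [hubGraph_adj, HalfAdj]⟩

theorem ncard_range_center :
    (Set.range (center : Fin l → HubVertex p l m)).ncard = l := by
  rw [Set.ncard_range_of_injective (fun a b h => by simpa using h), Nat.card_fin]

theorem lowerIr_hubGraph (hl : 0 < l) (hm : l ≤ m) : lowerIr (hubGraph p l m) = l := by
  refine IsLeast.csInf_eq
    ⟨⟨_, isMaxIrredundant_range_center hl (hl.trans_le hm), ncard_range_center⟩, ?_⟩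
  rintro n ⟨S, hS, rfl⟩
  by_contra! hlt
  have hsub : Set.range center ⊆ S := by
    rintro _ ⟨i, rfl⟩
    exact center_mem_of_ncard_lt hS (hlt.trans_le hm) i
  have hle := Set.ncard_le_ncard hsub
  rw [ncard_range_center] at hle
  omega

/-- Given any coloring of the centers, color the rest of the hub graph with `p` further colors. -/
def hubColor {α : Type*} (f : Fin l → α) (a b : Fin p) : HubVertex p l m → α ⊕ Fin p
  | center i => Sum.inl (f i)
  | hub q => Sum.inr q
  | leaf _ _ => Sum.inr a
  | tip q _ => Sum.inr (if q = a then b else a)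

theorem hubColor_ne {α : Type*} (f : Fin l → α) {a b : Fin p} (hab : a ≠ b)
    {u v : HubVertex p l m} (h : (hubGraph p l m).Adj u v) :
    hubColor f a b u ≠ hubColor f a b v := by
  have key {u v : HubVertex p l m} (h : HalfAdj u v) : hubColor f a b u ≠ hubColor f a b v := by
    cases u <;> cases v <;> simp_all [HalfAdj, hubColor]
    grind
  exact h.elim key fun h => (key h).symm

theorem chromaticNumber_hubGraph (hp : 2 ≤ p) (hl : 0 < l) :
    (hubGraph p l m).chromaticNumber = (p + 1 : ℕ) := by
  have hab : (⟨0, by omega⟩ : Fin p) ≠ ⟨1, by omega⟩ := by simp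
  apply le_antisymm
  · have C : (hubGraph p l m).Coloring (Unit ⊕ Fin p) :=
      SimpleGraph.Coloring.mk _ fun h => hubColor_ne (fun _ => ()) hab h
    have := C.colorable.chromaticNumber_le
    simpa [add_comm] using this
  · refine SimpleGraph.le_chromaticNumber_of_pairwise_adj (ι := Option (Fin p)) (by simp)
      (fun o => o.elim (center ⟨0, hl⟩) hub) ?_
    rintro (_ | q) (_ | q') hne <;> simp_all [hubGraph_adj, HalfAdj]

theorem irChrom_hubGraph (hp : 2 ≤ p) (hl : 0 < l) (hm : p + l ≤ m) :
    irChrom (hubGraph p l m) = p + l := by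
  have hab : (⟨0, by omega⟩ : Fin p) ≠ ⟨1, by omega⟩ := by simp
  refine IsLeast.csInf_eq ⟨?_, ?_⟩
  · let e : Fin l ⊕ Fin p ≃ Fin (p + l) := (Equiv.sumComm _ _).trans finSumFinEquiv
    refine ⟨fun v => e (hubColor id _ _ v), fun u v h => e.injective.ne (hubColor_ne id hab h),
      _, isMaxIrredundant_range_center hl (by omega), ?_⟩
    rintro _ ⟨i, rfl⟩ _ ⟨i', rfl⟩ h
    simpa [hubColor] using h
  · rintro n ⟨C, hC, R, hR, hinj⟩
    by_contra! hlt
    have hcard : R.ncard ≤ n := by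
      rw [← hinj.ncard_image]
      simpa using Set.ncard_le_card (C '' R)
    have hcenter := center_mem_of_ncard_lt hR (by omega)
    have hsum : Function.Injective (fun x : Fin l ⊕ Fin p => C (Sum.elim center hub x)) := by
      rintro (i | q) (i' | q') h
      · simpa using hinj (hcenter i) (hcenter i') h
      · exact absurd h (hC _ _ (Or.inl trivial))
      · exact absurd h (hC _ _ (Or.inr trivial))
      · by_contra hne
        exact hC (hub q) (hub q') (Or.inl fun hq => hne (congrArg Sum.inr hq)) h
    have := Fintype.card_le_of_injective _ hsum
    simp at this
    omega

end HubGraph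

/-- for `k ≥ 3` and `l ≥ 1` there exists a graph with
`χ(G) = k`, `ir(G) = l` and `χᵢ(G) = k + l − 1`. -/
theorem exists_graph_irChrom_eq_chrom_add_ir_sub_one
    (k l : ℕ) (hk : 3 ≤ k) (hl : 1 ≤ l) :
    ∃ (n : ℕ) (G : SimpleGraph (Fin n)),
      G.chromaticNumber = (k : ℕ∞) ∧ lowerIr G = l ∧ irChrom G = k + l - 1 := by
  let G := hubGraph (k - 1) l (k + l)
  let e := SimpleGraph.Iso.map (Finite.equivFin (HubVertex (k - 1) l (k + l))) G
  refine ⟨_, _, ?_, (lowerIr_congr e).symm.trans (lowerIr_hubGraph hl (by omega)), ?_⟩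
  · rw [← SimpleGraph.chromaticNumber_congr e, chromaticNumber_hubGraph (by omega) hl, Nat.sub_add_cancel]
    omega
  · rw [← irChrom_congr e, irChrom_hubGraph (by omega) hl (by omega)]
    omega
end

section
/- Let G be a finite simple graph of order n with at least two vertices and no isolated vertex. Then χ_i(G) = n if and only if G is the complete graph K_n. -/
/-!  Common definitions: irredundance, irredundance coloring,
irredundance compelling coloring, and related graph parameters. -/

variable {V : Type*}

/-- A maximal independent set is a maximal irredundant set. -/
lemma isMaxIrredundant_of_maximal_isIndepSet {G : SimpleGraph V} {M : Set V}
    (hM : Maximal G.IsIndepSet M) : IsMaxIrredundant G M := by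
  have hdom : ∀ x, ∃ w ∈ M, x ∈ closedNbr G w := by
    intro x
    by_contra! h
    have hx : ∀ w ∈ M, x ≠ w ∧ ¬ G.Adj w x := fun w hw => by
      simpa [closedNbr] using h w hw
    have hind : G.IsIndepSet (insert x M) :=
      Set.Pairwise.insert hM.prop fun w hw _ =>
        ⟨fun hadj => (hx w hw).2 hadj.symm, (hx w hw).2⟩
    exact (hx x (hM.le_of_ge hind (Set.subset_insert x M) (Set.mem_insert x M))).1 rfl
  constructor
  · intro v hv
    refine ⟨v, Set.mem_insert v _, ?_⟩
    simp only [Set.mem_iUnion, not_exists]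
    rintro w ⟨hw, hwv⟩ (rfl | hadj)
    · exact hwv rfl
    · exact hM.prop hw hv hwv hadj
  · intro w hw hirr
    obtain ⟨x, -, hx⟩ := hirr w (Set.mem_insert w M)
    obtain ⟨y, hy, hxy⟩ := hdom x
    refine hx (Set.mem_biUnion ⟨Set.mem_insert_of_mem w hy, ?_⟩ hxy)
    rintro rfl
    exact hw hy

/-- In a finite graph every vertex lies in an independent maximal irredundant set. -/
lemma exists_isMaxIrredundant_isIndepSet_mem [Finite V] (G : SimpleGraph V) (c : V) :
    ∃ M : Set V, IsMaxIrredundant G M ∧ G.IsIndepSet M ∧ c ∈ M := by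
  have hc : G.IsIndepSet {c} := Set.pairwise_singleton c _
  obtain ⟨M, hcM, hM⟩ := (Set.toFinite {s : Set V | G.IsIndepSet s}).exists_le_maximal hc
  exact ⟨M, isMaxIrredundant_of_maximal_isIndepSet hM, hM.prop, hcM rfl⟩

/-- An irredundance coloring with colors in any finite type gives an upper bound on `χᵢ`. -/
lemma irChrom_le_card {W : Type*} [Fintype W] {G : SimpleGraph V} (f : V → W)
    (hf : ∀ u v, G.Adj u v → f u ≠ f v) {R : Set V} (hR : IsMaxIrredundant G R)
    (hinj : Set.InjOn f R) : irChrom G ≤ Fintype.card W := by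
  let e := Fintype.equivFin W
  exact Nat.sInf_le ⟨e ∘ f, fun u v h => e.injective.ne (hf u v h), R, hR,
    e.injective.injOn.comp hinj (Set.mapsTo_univ f R)⟩

/-- A finite graph with `n` vertices is irredundance colorable with `n` colors. -/
lemma irredColorable_card [Fintype V] [Nonempty V] (G : SimpleGraph V) :
    IrredColorable G (Fintype.card V) := by
  obtain ⟨M, hM, -, -⟩ := exists_isMaxIrredundant_isIndepSet_mem G (Classical.arbitrary V)
  let e := Fintype.equivFin V
  exact ⟨e, fun u v h => e.injective.ne h.ne, M, hM, e.injective.injOn⟩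

/-- If two nonadjacent vertices are not both in some maximal irredundant set, they can share a
color, so `χᵢ(G) < n`. -/
lemma irChrom_lt_card [Fintype V] {G : SimpleGraph V} {a b : V} (hab : a ≠ b)
    (hadj : ¬ G.Adj a b) {R : Set V} (hR : IsMaxIrredundant G R) (ha : a ∉ R) :
    irChrom G < Fintype.card V := by
  classical
  let f : V → {x // x ≠ b} := fun x => if h : x = b then ⟨a, hab⟩ else ⟨x, h⟩
  have hf : ∀ x y, f x = f y → x = y ∨ x = a ∧ y = b ∨ x = b ∧ y = a := by
    intro x y h
    by_cases hx : x = b <;> by_cases hy : y = b <;> simp [f, hx, hy] at h <;> grind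
  refine (irChrom_le_card f ?_ hR ?_).trans_lt
    (Fintype.card_subtype_lt (x := b) (by simp))
  · intro u v huv h
    rcases hf u v h with rfl | ⟨rfl, rfl⟩ | ⟨rfl, rfl⟩
    · exact huv.ne rfl
    · exact hadj huv
    · exact hadj huv.symm
  · intro u hu v hv h
    rcases hf u v h with rfl | ⟨rfl, rfl⟩ | ⟨rfl, rfl⟩
    · rfl
    · exact absurd hu ha
    · exact absurd hv ha

/-- for a graph of order `n ≥ 2` without isolated vertices,
`χᵢ(G) = n` iff `G` is complete. -/
theorem irChrom_eq_card_iff_complete {V : Type*} [Fintype V] (G : SimpleGraph V)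
    (hcard : 2 ≤ Fintype.card V) (hiso : ∀ v : V, ∃ u, G.Adj v u) :
    irChrom G = Fintype.card V ↔ G = ⊤ := by
  constructor
  · intro h
    by_contra hG
    obtain ⟨a, b, hab, hadj⟩ := SimpleGraph.ne_top_iff_exists_not_adj.mp hG
    obtain ⟨c, hac⟩ := hiso a
    obtain ⟨M, hM, hind, hc⟩ := exists_isMaxIrredundant_isIndepSet_mem G c
    have ha : a ∉ M := fun ha => hind ha hc hac.ne hac
    exact (irChrom_lt_card hab hadj hM ha).ne h
  · rintro rfl
    have : Nonempty V := Fintype.card_pos_iff.mp (by lia)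
    refine le_antisymm (Nat.sInf_le (irredColorable_card _)) ?_
    refine le_csInf ⟨_, irredColorable_card _⟩ ?_
    rintro k ⟨C, hC, -⟩
    have hinj : Function.Injective C := fun u v h => by
      by_contra huv
      exact hC u v huv h
    simpa using Fintype.card_le_of_injective C hinj
end

section
/- For all natural numbers k and n with 2 ≤ k ≤ n, there exists a finite simple graph G of order n such that χ_i(G) = k. -/
/-!  Common definitions: irredundance, irredundance coloring,
irredundance compelling coloring, and related graph parameters. -/

variable {V : Type*}

/-- A vertex adjacent to all others forms a maximal irredundant set by itself. -/
theorem isMaxIrredundant_singleton (G : SimpleGraph V) (v : V) (hv : ∀ w, w ≠ v → G.Adj v w) :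
    IsMaxIrredundant G {v} := by
  refine ⟨?_, ?_⟩
  · rintro w rfl
    exact ⟨w, by simp [pnSet, closedNbr]⟩
  · intro w hw h
    obtain ⟨x, -, hx⟩ := h w (Set.mem_insert w {v})
    refine hx (Set.mem_biUnion (x := v) ⟨by simp, fun h => hw h.symm⟩ ?_)
    by_cases hxv : x = v
    · exact Or.inl hxv
    · exact Or.inr (hv x hxv)

/-- A complete `k`-partite graph with a part consisting of a single vertex has irredundance
chromatic number `k`. -/
theorem irChrom_comap_top {k : ℕ} (C : V → Fin k) (hC : Function.Surjective C) (v : V)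
    (hv : ∀ w, C w = C v → w = v) : irChrom ((⊤ : SimpleGraph (Fin k)).comap C) = k := by
  have hmem : IrredColorable ((⊤ : SimpleGraph (Fin k)).comap C) k :=
    ⟨C, fun _ _ h => h, {v},
      isMaxIrredundant_singleton _ v fun w hw h => hw (hv w h.symm), Set.injOn_singleton C v⟩
  refine le_antisymm (Nat.sInf_le hmem) (le_csInf ⟨k, hmem⟩ ?_)
  rintro m ⟨D, hD, -⟩
  obtain ⟨s, hs⟩ := hC.hasRightInverse
  have hinj : Function.Injective (D ∘ s) := by
    intro a b hab
    by_contra hne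
    exact hD (s a) (s b) (by simpa [hs a, hs b] using hne) hab
  simpa using Fintype.card_le_of_injective _ hinj

/-- for `2 ≤ k ≤ n` there exists a graph of order `n` with
`χᵢ(G) = k`. -/
theorem exists_graph_irChrom_eq (k n : ℕ) (hk : 2 ≤ k) (hn : k ≤ n) :
    ∃ G : SimpleGraph (Fin n), irChrom G = k := by
  refine ⟨_, irChrom_comap_top (fun u : Fin n => (⟨min u (k - 1), by omega⟩ : Fin k)) ?_
    ⟨0, by omega⟩ ?_⟩
  · intro i
    exact ⟨⟨i, by omega⟩, Fin.ext (by simp; omega)⟩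
  · intro w hw
    simp only [Fin.mk.injEq] at hw
    exact Fin.ext (by simp; omega)
end

section
/- There are infinitely many IRC-colorable graphs with edge-connectivity 1; that is, for every natural number N there exists a connected finite simple graph G of order greater than N such that G has a bridge (edge-connectivity 1) and G admits an irredundance compelling coloring. -/
/-!  Common definitions: irredundance, irredundance coloring,
irredundance compelling coloring, and related graph parameters. -/

variable {V : Type*}

/-- A proper coloring with two colors, both of them used, is irredundance compelling as soon as
every vertex has two distinct neighbors. -/
theorem isIRCColoring_of_two_neighbors (G : SimpleGraph V) (C : V → Fin 2)
    (hC : IsProperColoring G C) (hsurj : Function.Surjective C)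
    (hdeg : ∀ v, ∃ x y, x ≠ y ∧ G.Adj v x ∧ G.Adj v y) : IsIRCColoring G C := by
  refine ⟨hC, hsurj, fun T hT v hv => ?_⟩
  have hinj : ∀ a ∈ T, ∀ b ∈ T, C a = C b → a = b := fun a ha b hb h =>
    (hT (C b)).unique ⟨ha, h⟩ ⟨hb, rfl⟩
  have hopp : ∀ a b c : V, C a ≠ C b → C a ≠ C c → C b = C c := by
    intro a b c h₁ h₂
    omega
  obtain ⟨x, hvx, hxT⟩ : ∃ x, G.Adj v x ∧ x ∉ T := by
    obtain ⟨x, y, hxy, hvx, hvy⟩ := hdeg v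
    by_cases hx : x ∈ T
    · exact ⟨y, hvy, fun hy => hxy (hinj x hx y hy (hopp v x y (hC _ _ hvx) (hC _ _ hvy)))⟩
    · exact ⟨x, hvx, hx⟩
  refine ⟨x, Or.inr hvx, fun hmem => ?_⟩
  simp only [Set.mem_iUnion] at hmem
  obtain ⟨w, ⟨hwT, hwv⟩, rfl | hwx⟩ := hmem
  · exact hxT hwT
  · exact hC w x hwx (hopp v w x (fun h => hwv (hinj v hv w hwT h).symm) (hC _ _ hvx))

/-- The complete bipartite graphs between the even and the odd vertices of `{0, 1, 2, 3}` and of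
`{4, …, n - 1}`, joined by the edge between `3` and `4`. -/
def bridgedBipartite (n : ℕ) : SimpleGraph (Fin n) where
  Adj a b := a.val % 2 ≠ b.val % 2 ∧
    ((a.val < 4 ↔ b.val < 4) ∨ (a.val = 3 ∧ b.val = 4) ∨ (a.val = 4 ∧ b.val = 3))
  symm := ⟨fun a b h => by omega⟩
  loopless := ⟨fun a h => h.1 rfl⟩

theorem bridgedBipartite_adj {n : ℕ} {a b : Fin n} :
    (bridgedBipartite n).Adj a b ↔ a.val % 2 ≠ b.val % 2 ∧
      ((a.val < 4 ↔ b.val < 4) ∨ (a.val = 3 ∧ b.val = 4) ∨ (a.val = 4 ∧ b.val = 3)) :=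
  Iff.rfl

theorem bridgedBipartite_connected {n : ℕ} (hn : 8 ≤ n) : (bridgedBipartite n).Connected := by
  have hadj : ∀ a b : Fin n, (bridgedBipartite n).Adj a b →
      (bridgedBipartite n).Reachable a b := fun _ _ h => h.reachable
  simp only [bridgedBipartite_adj] at hadj
  rw [SimpleGraph.connected_iff_exists_forall_reachable]
  refine ⟨⟨3, by omega⟩, fun w => ?_⟩
  have h34 := hadj ⟨3, by omega⟩ ⟨4, by omega⟩ (by simp)
  by_cases hw : w.val < 4 <;> by_cases hp : w.val % 2 = 0
  · exact hadj _ _ (by simp; omega)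
  · exact (hadj _ ⟨2, by omega⟩ (by simp)).trans (hadj _ _ (by simp; omega))
  · exact h34.trans ((hadj _ ⟨5, by omega⟩ (by simp)).trans (hadj _ _ (by simp; omega)))
  · exact h34.trans (hadj _ _ (by simp; omega))

theorem bridgedBipartite_isBridge {n : ℕ} (hn : 8 ≤ n) :
    (bridgedBipartite n).IsBridge s(⟨3, by omega⟩, ⟨4, by omega⟩) := by
  rw [SimpleGraph.isBridge_iff]
  rintro ⟨p⟩
  obtain ⟨d, -, hd₁, hd₂⟩ := p.exists_boundary_dart {a | a.val < 4} (by simp) (by simp)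
  have hd := d.adj
  simp only [Set.mem_ofPred_eq] at hd₁ hd₂
  simp only [SimpleGraph.deleteEdges_adj, bridgedBipartite_adj, Set.mem_singleton_iff,
    Sym2.eq_iff, Fin.ext_iff] at hd
  omega

theorem bridgedBipartite_ircColorable {n : ℕ} (hn : 8 ≤ n) : IRCColorable (bridgedBipartite n) := by
  refine ⟨2, fun a => ⟨a.val % 2, Nat.mod_lt _ two_pos⟩,
    isIRCColoring_of_two_neighbors _ _ (fun a b h hab => h.1 (Fin.ext_iff.1 hab))
      (fun i => ⟨⟨i.val, by omega⟩, Fin.ext (Nat.mod_eq_of_lt i.isLt)⟩) fun v => ?_⟩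
  simp only [bridgedBipartite_adj]
  by_cases hv : v.val < 4 <;> by_cases hp : v.val % 2 = 0
  · exact ⟨⟨1, by omega⟩, ⟨3, by omega⟩, by simp, by simp; omega, by simp; omega⟩
  · exact ⟨⟨0, by omega⟩, ⟨2, by omega⟩, by simp, by simp; omega, by simp; omega⟩
  · exact ⟨⟨5, by omega⟩, ⟨7, by omega⟩, by simp, by simp; omega, by simp; omega⟩
  · exact ⟨⟨4, by omega⟩, ⟨6, by omega⟩, by simp, by simp; omega, by simp; omega⟩

/-- there are infinitely many IRC-colorable connected graphs
with a bridge (edge-connectivity 1). -/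
theorem infinitely_many_IRCColorable_with_bridge (N : ℕ) :
    ∃ (n : ℕ) (G : SimpleGraph (Fin n)), N < n ∧ G.Connected ∧
      (∃ e : Sym2 (Fin n), G.IsBridge e) ∧ IRCColorable G :=
  have hn : 8 ≤ N + 8 := by omega
  ⟨N + 8, bridgedBipartite (N + 8), by omega, bridgedBipartite_connected hn,
    ⟨_, bridgedBipartite_isBridge hn⟩, bridgedBipartite_ircColorable hn⟩
end
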